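/- For all nonnegative integers m1,m2,m3 and every integer k >= 1, S(k*m1, k*m2, k*m3) equals the k-fold Minkowski sum S(m1,m2,m3)+...+S(m1,m2,m3) (k summands). In particular the polytope P(lambda) is a normal lattice polytope: every lattice point of the dilate k*P(lambda) is a sum of k lattice points of P(lambda). -/

import Mathlib

open scoped Pointwise

/-- The set `S(m1,m2,m3)` of lattice points of the polytope `P(λ)` attached to the
dominant integral weight `λ = m1·ω₁ + m2·ω₂ + m3·ω₃` of the simple Lie algebra of
type `B₃`.  Coordinates: `s 0 = s₁, …, s 8 = s₉`. -/
def SB3 (m1 m2 m3 : ℕ) : Set (Fin 9 → ℕ) :=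
  {s |
    s 1 + s 2 + s 3 + s 7 + s 8 ≤ m1 + m2 + m3 ∧
    s 2 + s 3 + s 4 + s 7 + s 8 ≤ m1 + m2 + m3 ∧
    s 3 + s 4 + s 5 + s 7 + s 8 ≤ m1 + m2 + m3 ∧
    s 4 + s 5 + s 6 + s 7 + s 8 ≤ m1 + m2 + m3 ∧
    s 2 + s 4 + s 7 ≤ m2 + m3 ∧
    s 4 + s 6 + s 7 ≤ m2 + m3 ∧
    s 5 + s 6 + s 8 ≤ m1 + m2 ∧
    s 6 ≤ m2 ∧
    s 7 ≤ m3 ∧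
    s 8 ≤ m1 ∧
    s 2 + s 3 + s 4 + s 5 + s 6 + s 7 + s 8 ≤ m1 + 2 * m2 + m3 ∧
    s 0 + s 1 + s 2 + s 3 + s 4 + s 6 + s 8 ≤ m1 + 2 * m2 + m3 ∧
    s 0 + s 2 + s 3 + s 4 + s 5 + s 6 + s 8 ≤ m1 + 2 * m2 + m3 ∧
    s 1 + s 2 + s 3 + s 4 + s 6 + s 7 + s 8 ≤ m1 + 2 * m2 + m3 ∧
    s 0 + s 1 + s 2 + s 3 + s 4 + s 5 + s 6 + 2 * s 8 ≤ 2 * m1 + 2 * m2 + m3 ∧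
    s 1 + s 2 + s 3 + s 4 + s 5 + s 6 + s 7 + 2 * s 8 ≤ 2 * m1 + 2 * m2 + m3 ∧
    s 0 + s 1 + 2 * (s 2 + s 3 + s 4) + s 5 + s 6 + s 7 + 2 * s 8 ≤ 2 * m1 + 3 * m2 + 2 * m3 ∧
    s 1 + 2 * (s 2 + s 3 + s 4) + s 5 + s 6 + 2 * (s 7 + s 8) ≤ 2 * m1 + 3 * m2 + 2 * m3 ∧
    s 2 + s 3 + 2 * s 4 + s 5 + s 6 + 2 * s 7 + s 8 ≤ m1 + 2 * m2 + 2 * m3}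

/-!
It suffices to write `S(λ)` as a sum of copies of the sets `S(ωᵢ)`, which is done in two ways.

* A point `s ∈ S(λ + ωᵢ)` equals `t + (s - t)` with `t ∈ S(ωᵢ)` and `s - t ∈ S(λ)` as soon as
  `t ≤ s` and `t` makes up for the excess of `s` over every bound of `S(λ)`. For `ω₁`, and for
  `ω₃` once `m₁ = 0`, the few bounds that `s` exceeds dictate `t`.
* If `m₁ = m₃ = 0`, the irredundant inequalities only bound sums of consecutive coordinates.
  Rounding down a fixed proportion of all partial sums of `s` then gives the partial sums of a
  summand of `s` that obeys the same proportion of every bound, and the rest of `s` obeys the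
  complementary proportion.
-/

section Generalities

variable {M : Type*} [AddCommMonoid M]

theorem mem_add_of_tsub_mem [PartialOrder M] [ExistsAddOfLE M] [AddLeftMono M] [Sub M]
    [OrderedSub M] {A B : Set M} {s t : M} (hts : t ≤ s) (ht : t ∈ A) (hst : s - t ∈ B) :
    s ∈ A + B :=
  Set.mem_add.2 ⟨t, ht, s - t, hst, add_tsub_cancel_of_le hts⟩

theorem eq_nsmul_add_of_succ {F : ℕ → M} {a : M} (hF : ∀ n, F (n + 1) = a + F n) (n : ℕ) :
    F n = n • a + F 0 := by
  induction n with
  | zero => simp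
  | succ n ih => rw [hF, ih, succ_nsmul', add_assoc]

theorem partialSum_add {n : ℕ} (s t : Fin n → M) :
    Fin.partialSum (s + t) = Fin.partialSum s + Fin.partialSum t := by
  funext j
  induction j using Fin.induction with
  | zero => simp
  | succ j ih => simp only [Fin.partialSum_succ, Pi.add_apply, ih, add_add_add_comm]

end Generalities

section ConsecutiveSums

variable {n : ℕ} {ι : Type*}

/-- The lattice points of the polytope in the positive orthant of `ℝⁿ` on which, for every `r`,
the sum of the coordinates with index in `[lo r, hi r)` is at most `c r`. The sum is encoded as the
difference of two partial sums. -/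
def consecutiveSumsLE (lo hi : ι → Fin (n + 1)) (c : ι → ℕ) : Set (Fin n → ℕ) :=
  {s | ∀ r, Fin.partialSum s (hi r) ≤ Fin.partialSum s (lo r) + c r}

theorem partialSum_tsub {p : Fin (n + 1) → ℕ} (hp : Monotone p) (hp₀ : p 0 = 0) :
    Fin.partialSum (fun i : Fin n => p i.succ - p i.castSucc) = p := by
  funext j
  induction j using Fin.induction with
  | zero => simp [hp₀]
  | succ j ih => rw [Fin.partialSum_succ, ih, add_tsub_cancel_of_le (hp j.castSucc_le_succ)]

theorem monotone_partialSum (s : Fin n → ℕ) : Monotone (Fin.partialSum s) :=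
  Fin.monotone_iff_le_succ.2 fun i => by simp [Fin.partialSum_succ]

theorem mul_add_div_add_le (k l x y : ℕ) : k * (x + y) / (k + l) ≤ k * x / (k + l) + y := by
  obtain h | h := Nat.eq_zero_or_pos (k + l)
  · simp [h]
  · calc k * (x + y) / (k + l) ≤ (k * x + (k + l) * y) / (k + l) :=
          Nat.div_le_div_right (by rw [mul_add]; gcongr; omega)
      _ = k * x / (k + l) + y := Nat.add_mul_div_left _ _ h

theorem mul_add_mul_div_add (k l x c : ℕ) :
    k * (x + (k + l) * c) / (k + l) = k * x / (k + l) + k * c := by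
  obtain h | h := Nat.eq_zero_or_pos (k + l)
  · simp [Nat.eq_zero_of_add_eq_zero_right h]
  · rw [mul_add, mul_left_comm, Nat.add_mul_div_left _ _ h]

/-- The summand of `s` obtained by rounding down `k / (k + l)` times the partial sums of `s`. -/
def proportionalPart (k l : ℕ) (s : Fin n → ℕ) : Fin n → ℕ := fun i =>
  k * Fin.partialSum s i.succ / (k + l) - k * Fin.partialSum s i.castSucc / (k + l)

theorem partialSum_proportionalPart (k l : ℕ) (s : Fin n → ℕ) (j : Fin (n + 1)) :
    Fin.partialSum (proportionalPart k l s) j = k * Fin.partialSum s j / (k + l) := by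
  have hmono : Monotone fun j => k * Fin.partialSum s j / (k + l) := fun _ _ h =>
    Nat.div_le_div_right (Nat.mul_le_mul_left k (monotone_partialSum s h))
  exact congrFun (partialSum_tsub hmono (by simp)) j

theorem proportionalPart_le (k l : ℕ) (s : Fin n → ℕ) : proportionalPart k l s ≤ s := fun i =>
  tsub_le_iff_left.2 <| by
    simpa only [Fin.partialSum_succ] using
      mul_add_div_add_le k l (Fin.partialSum s i.castSucc) (s i)

variable {lo hi : ι → Fin (n + 1)} {c d : ι → ℕ} {k l : ℕ} {s : Fin n → ℕ}

theorem proportionalPart_mem (hs : s ∈ consecutiveSumsLE lo hi ((k + l) • c)) :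
    proportionalPart k l s ∈ consecutiveSumsLE lo hi (k • c) := fun r => by
  simp only [partialSum_proportionalPart, Pi.smul_apply, smul_eq_mul]
  calc k * Fin.partialSum s (hi r) / (k + l)
      ≤ k * (Fin.partialSum s (lo r) + (k + l) * c r) / (k + l) :=
        Nat.div_le_div_right (Nat.mul_le_mul_left k (hs r))
    _ = k * Fin.partialSum s (lo r) / (k + l) + k * c r := mul_add_mul_div_add k l _ _

theorem sub_proportionalPart_mem (hs : s ∈ consecutiveSumsLE lo hi ((k + l) • c)) :
    s - proportionalPart k l s ∈ consecutiveSumsLE lo hi (l • c) := fun r => by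
  set p := Fin.partialSum s
  have partialSum_sub (j) :
      k * p j / (k + l) + Fin.partialSum (s - proportionalPart k l s) j = p j := by
    rw [← partialSum_proportionalPart, ← Pi.add_apply, ← partialSum_add,
      add_tsub_cancel_of_le (proportionalPart_le k l s)]
  have hr : p (hi r) ≤ p (lo r) + (k + l) * c r := hs r
  have lipschitz := mul_add_div_add_le k l (p (hi r)) (p (lo r) + (k + l) * c r - p (hi r))
  rw [add_tsub_cancel_of_le hr, mul_add_mul_div_add] at lipschitz
  have hlo := partialSum_sub (lo r)
  have hhi := partialSum_sub (hi r)
  simp only [Pi.smul_apply, smul_eq_mul, add_mul] at hr lipschitz ⊢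
  omega

theorem consecutiveSumsLE_add_subset :
    consecutiveSumsLE lo hi c + consecutiveSumsLE lo hi d ⊆ consecutiveSumsLE lo hi (c + d) := by
  rintro _ ⟨s, hs, t, ht, rfl⟩ r
  simpa only [partialSum_add, Pi.add_apply, add_add_add_comm] using add_le_add (hs r) (ht r)

theorem consecutiveSumsLE_add_nsmul :
    consecutiveSumsLE lo hi ((k + l) • c) =
      consecutiveSumsLE lo hi (k • c) + consecutiveSumsLE lo hi (l • c) := by
  refine Set.Subset.antisymm (fun s hs => ?_) ?_
  · exact mem_add_of_tsub_mem (proportionalPart_le k l s) (proportionalPart_mem hs)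
      (sub_proportionalPart_mem hs)
  · rw [add_smul]
    exact consecutiveSumsLE_add_subset

end ConsecutiveSums

section SB3

variable {a b c : ℕ} {s : Fin 9 → ℕ}

theorem SB3_add_subset (a b c a' b' c' : ℕ) :
    SB3 a b c + SB3 a' b' c' ⊆ SB3 (a + a') (b + b') (c + c') := by
  rintro _ ⟨s, hs, t, ht, rfl⟩
  simp only [SB3, Set.mem_ofPred_eq, Pi.add_apply] at hs ht ⊢
  and_intros <;> omega

/-- With `s 8 = 0`, the inequalities (17), (18), (19) are the sums (15) + (2), (16) + (2),
(2) + (4), and every other omitted one has the same bound as, and fewer terms than, one below. -/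
theorem mem_SB3_zero_left :
    s ∈ SB3 0 b c ↔
      s 8 = 0 ∧ s 7 ≤ c ∧ s 5 + s 6 ≤ b ∧
      s 1 + s 2 + s 3 + s 7 ≤ b + c ∧ s 2 + s 3 + s 4 + s 7 ≤ b + c ∧
      s 3 + s 4 + s 5 + s 7 ≤ b + c ∧ s 4 + s 5 + s 6 + s 7 ≤ b + c ∧
      s 0 + s 1 + s 2 + s 3 + s 4 + s 5 + s 6 ≤ 2 * b + c ∧
      s 1 + s 2 + s 3 + s 4 + s 5 + s 6 + s 7 ≤ 2 * b + c := by
  simp only [SB3, Set.mem_ofPred_eq]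
  constructor
  · intro h
    and_intros <;> omega
  · intro h
    and_intros <;> omega

theorem SB3_zero : SB3 0 0 0 = 0 := by
  ext s
  simp only [mem_SB3_zero_left, Set.mem_zero]
  constructor
  · intro hs
    funext i
    fin_cases i <;> simp <;> omega
  · rintro rfl
    simp only [Pi.zero_apply, add_zero, mul_zero, le_refl, and_self]

theorem SB3_mul_omega₂_eq_consecutiveSumsLE (b : ℕ) :
    SB3 0 b 0 = consecutiveSumsLE (ι := Fin 6) ![1, 2, 3, 4, 0, 7] ![4, 5, 6, 7, 7, 9]
      (b • ![1, 1, 1, 1, 2, 0]) := by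
  ext s
  rw [mem_SB3_zero_left]
  simp [consecutiveSumsLE, Fin.forall_fin_succ, Fin.partialSum]
  omega

/-- A summand in `S(ω₁)` of the point `s` of `S(λ + ω₁)`, where `λ = a·ω₁ + b·ω₂ + c·ω₃`.
The point `Pi.single 8 1` attains every bound of `S(ω₁)`, so it splits off whenever it is `≤ s`;
if `s 8 = 0`, the choice depends on whether `s` violates inequalities (2) and (12) of `S(λ)`. -/
def omega₁Summand (a b c : ℕ) (s : Fin 9 → ℕ) : Fin 9 → ℕ :=
  if 0 < s 8 then Pi.single 8 1
  else if a + b + c < s 2 + s 3 + s 4 + s 7 then Pi.single 3 1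
  else if 0 < s 1 ∨ 0 < s 5 then Pi.single 1 (min 1 (s 1)) + Pi.single 5 (min 1 (s 5))
  else if a + 2 * b + c < s 0 + s 2 + s 3 + s 4 + s 6 then Pi.single 0 1
  else 0

theorem omega₁Summand_le (hs : s ∈ SB3 (a + 1) b c) : omega₁Summand a b c s ≤ s := by
  simp only [SB3, Set.mem_ofPred_eq, Pi.le_def, Fin.forall_fin_succ, omega₁Summand] at hs ⊢
  split_ifs <;> simp [Pi.single_apply] <;> omega

theorem omega₁Summand_mem : omega₁Summand a b c s ∈ SB3 1 0 0 := by
  simp only [SB3, Set.mem_ofPred_eq, omega₁Summand]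
  split_ifs <;> simp
  all_goals omega

theorem sub_omega₁Summand_mem (hs : s ∈ SB3 (a + 1) b c) :
    s - omega₁Summand a b c s ∈ SB3 a b c := by
  simp only [SB3, Set.mem_ofPred_eq, Pi.sub_apply, omega₁Summand] at hs ⊢
  split_ifs <;> simp <;> omega

theorem SB3_add_omega₁ (a b c : ℕ) : SB3 (a + 1) b c = SB3 1 0 0 + SB3 a b c := by
  refine Set.Subset.antisymm (fun s hs => ?_) ?_
  · exact mem_add_of_tsub_mem (omega₁Summand_le hs) omega₁Summand_mem
      (sub_omega₁Summand_mem hs)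
  · simpa only [add_comm, add_zero] using SB3_add_subset 1 0 0 a b c

/-- A summand in `S(ω₃)` of the point `s` of `S(λ + ω₃)`, where `λ = b·ω₂ + c·ω₃`.
Among the bounds of `mem_SB3_zero_left` for `S(ω₃)`, `Pi.single 7 1` attains all but the one on
`s 0 + ⋯ + s 6`, which is why a multiple of `Pi.single 0 1` is added to it. -/
def omega₃Summand (b c : ℕ) (s : Fin 9 → ℕ) : Fin 9 → ℕ :=
  if c < s 7 then
    Pi.single 7 1 + Pi.single 0 (s 0 + s 1 + s 2 + s 3 + s 4 + s 5 + s 6 - (2 * b + c))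
  else if b + c < s 4 + s 5 + s 6 + s 7 then Pi.single 4 1
  else if 0 < s 3 then Pi.single 3 1
  else if b + c < s 2 + s 4 + s 7 then Pi.single 2 1
  else if 0 < s 1 then Pi.single 1 1
  else if 2 * b + c < s 0 + s 2 + s 4 + s 5 + s 6 then Pi.single 0 1
  else 0

theorem omega₃Summand_le (hs : s ∈ SB3 0 b (c + 1)) : omega₃Summand b c s ≤ s := by
  simp only [mem_SB3_zero_left, Pi.le_def, Fin.forall_fin_succ, omega₃Summand] at hs ⊢
  split_ifs <;> simp [Pi.single_apply] <;> omega

theorem omega₃Summand_mem (hs : s ∈ SB3 0 b (c + 1)) : omega₃Summand b c s ∈ SB3 0 0 1 := by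
  simp only [mem_SB3_zero_left, omega₃Summand] at hs ⊢
  split_ifs <;> simp
  all_goals omega

theorem sub_omega₃Summand_mem (hs : s ∈ SB3 0 b (c + 1)) :
    s - omega₃Summand b c s ∈ SB3 0 b c := by
  simp only [mem_SB3_zero_left, Pi.sub_apply, omega₃Summand] at hs ⊢
  split_ifs <;> simp <;> omega

theorem SB3_add_omega₃ (b c : ℕ) : SB3 0 b (c + 1) = SB3 0 0 1 + SB3 0 b c := by
  refine Set.Subset.antisymm (fun s hs => ?_) ?_
  · exact mem_add_of_tsub_mem (omega₃Summand_le hs) (omega₃Summand_mem hs)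
      (sub_omega₃Summand_mem hs)
  · simpa only [add_comm, add_zero] using SB3_add_subset 0 0 1 0 b c

theorem SB3_add_omega₂ (b : ℕ) : SB3 0 (b + 1) 0 = SB3 0 1 0 + SB3 0 b 0 := by
  simp only [SB3_mul_omega₂_eq_consecutiveSumsLE, ← consecutiveSumsLE_add_nsmul, add_comm]

theorem SB3_eq_nsmul_add (m1 m2 m3 : ℕ) :
    SB3 m1 m2 m3 = m1 • SB3 1 0 0 + m2 • SB3 0 1 0 + m3 • SB3 0 0 1 := by
  have h₁ : SB3 m1 m2 m3 = m1 • SB3 1 0 0 + SB3 0 m2 m3 :=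
    eq_nsmul_add_of_succ (F := fun a => SB3 a m2 m3) (fun a => SB3_add_omega₁ a m2 m3) m1
  have h₃ : SB3 0 m2 m3 = m3 • SB3 0 0 1 + SB3 0 m2 0 :=
    eq_nsmul_add_of_succ (SB3_add_omega₃ m2) m3
  have h₂ : SB3 0 m2 0 = m2 • SB3 0 1 0 + SB3 0 0 0 :=
    eq_nsmul_add_of_succ (F := fun b => SB3 0 b 0) SB3_add_omega₂ m2
  rw [h₁, h₃, h₂, SB3_zero, add_zero, add_comm (m3 • _), add_assoc]

end SB3

/-- `S(k·λ)` is the `k`-fold Minkowski sum of `S(λ)` with itself;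
in particular `P(λ)` is a normal lattice polytope. -/
theorem SB3_normal (m1 m2 m3 k : ℕ) (hk : 1 ≤ k) :
    SB3 (k * m1) (k * m2) (k * m3) = ∑ _j ∈ Finset.range k, SB3 m1 m2 m3 := by
  rw [Finset.sum_const, Finset.card_range, SB3_eq_nsmul_add m1, SB3_eq_nsmul_add (k * m1)]
  simp only [mul_nsmul', nsmul_add]
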